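/- The series ∑_{k=0}^∞ c(k)/(k + 1/2)² converges and equals π·log 4, i.e. the quantity γ̃₁ := (1/π)∑_{k=0}^∞ c(k)/(k + 1/2)² equals log 4. -/

import Mathlib

/-!
Substituting `x = sin t`, the binomial series `∑ c k * x ^ (2 k) = 1 / √(1 - x ^ 2)` becomes
`∑ c k * sin t ^ (2 k) * cos t = 1` on `(0, π / 2)`. Multiplying by `- log (sin t) ≥ 0` and
integrating termwise, where
`∫ sin t ^ (2 k) * cos t * (- log (sin t)) = 1 / (2 k + 1) ^ 2` over `(0, π / 2)`,
gives `∑ c k / (2 k + 1) ^ 2 = - ∫ log (sin t) = (π / 2) * log 2`; the claim is four times this.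
The exchange of sum and integral is legitimate because the terms are nonnegative and their
integrals are dominated by `1 / (2 k + 1) ^ 2`, as `c k ≤ 1`.
-/

/-- `c k = |binom(-1/2, k)| = binom(2k, k) / 4^k`. -/
noncomputable def c (k : ℕ) : ℝ := (Nat.choose (2 * k) k : ℝ) / 4 ^ k

open MeasureTheory Set

lemma c_nonneg (k : ℕ) : 0 ≤ c k := by unfold c; positivity

lemma c_le_one (k : ℕ) : c k ≤ 1 := by
  unfold c
  rw [div_le_one (by positivity), ← Nat.centralBinom_eq_two_mul_choose]
  exact_mod_cast Nat.centralBinom_le_four_pow k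

lemma c_succ (k : ℕ) : ((k : ℝ) + 1) * c (k + 1) = c k * (1 / 2 + k) := by
  unfold c
  rw [← Nat.centralBinom_eq_two_mul_choose, ← Nat.centralBinom_eq_two_mul_choose]
  have h : ((k : ℝ) + 1) * (k + 1).centralBinom = 2 * (2 * k + 1) * k.centralBinom := by
    exact_mod_cast Nat.succ_mul_centralBinom_succ k
  rw [← mul_div_assoc, h, pow_succ]
  field_simp
  ring

lemma factorial_mul_c (n : ℕ) :
    (n.factorial : ℝ) * c n = (ascPochhammer ℕ n).smeval (1 / 2 : ℝ) := by
  induction n with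
  | zero => simp [c]
  | succ n ih =>
    rw [ascPochhammer_succ_right, Polynomial.smeval_mul, ← ih, Polynomial.smeval_add,
      Polynomial.smeval_X, Polynomial.smeval_natCast, Nat.factorial_succ]
    have := c_succ n
    push_cast
    simp only [pow_one, pow_zero, nsmul_eq_mul, mul_one]
    linear_combination (n.factorial : ℝ) * this

lemma choose_eq_c (n : ℕ) : Ring.choose ((1 / 2 : ℝ) + n - 1) n = c n := by
  have h : (n.factorial : ℝ) ≠ 0 := by positivity
  apply mul_left_cancel₀ h
  rw [factorial_mul_c, ← Ring.factorial_nsmul_multichoose_eq_ascPochhammer, nsmul_eq_mul,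
    Ring.choose]
  congr 2
  ring

/-- The binomial series for the exponent `-1/2`. -/
lemma hasSum_c_mul_pow {y : ℝ} (h0 : 0 ≤ y) (h1 : y < 1) :
    HasSum (fun k => c k * y ^ k) (1 / (1 - y) ^ (1 / 2 : ℝ)) := by
  have h := (Real.one_div_one_sub_rpow_hasFPowerSeriesOnBall_zero (1 / 2)).hasSum (y := y)
    (by simpa [Metric.mem_eball, edist_dist, abs_of_nonneg h0] using h1)
  simpa only [FormalMultilinearSeries.ofScalars_apply_eq, choose_eq_c, smul_eq_mul, zero_add] using h

lemma hasSum_c_sin {t : ℝ} (h0 : 0 < t) (h1 : t < Real.pi / 2) :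
    HasSum (fun k => c k * (Real.sin t ^ (2 * k) * Real.cos t)) 1 := by
  have hc : 0 < Real.cos t := Real.cos_pos_of_mem_Ioo ⟨by linarith, h1⟩
  have hsc := Real.sin_sq_add_cos_sq t
  have h := (hasSum_c_mul_pow (sq_nonneg (Real.sin t)) (by nlinarith)).mul_right (Real.cos t)
  rw [show 1 - Real.sin t ^ 2 = Real.cos t ^ 2 by linarith, ← Real.sqrt_eq_rpow,
    Real.sqrt_sq hc.le, one_div_mul_cancel hc.ne'] at h
  simpa only [pow_mul, mul_assoc] using h

lemma intervalIntegrable_term (k : ℕ) :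
    IntervalIntegrable (fun t => Real.sin t ^ (2 * k) * Real.cos t * -Real.log (Real.sin t))
      volume 0 (Real.pi / 2) := by
  have h : IntervalIntegrable (fun t => Real.log (Real.sin t)) volume 0 (Real.pi / 2) :=
    intervalIntegrable_log_sin
  exact h.neg.continuousOn_mul (by fun_prop)

/-- The antiderivative is `s ^ (2k+1) / (2k+1) ^ 2 - s ^ (2k+1) * log s / (2k+1)` at `s = sin t`. -/
lemma integral_term (k : ℕ) :
    ∫ t in (0 : ℝ)..(Real.pi / 2), Real.sin t ^ (2 * k) * Real.cos t * -Real.log (Real.sin t)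
      = 1 / (2 * (k : ℝ) + 1) ^ 2 := by
  have hk : (2 * (k : ℝ) + 1) ≠ 0 := by positivity
  -- The factor `s * log s` is kept together, since it is continuous also at `s = 0`.
  let F : ℝ → ℝ := fun t => Real.sin t ^ (2 * k + 1) / (2 * (k : ℝ) + 1) ^ 2
    - Real.sin t ^ (2 * k) * (Real.sin t * Real.log (Real.sin t)) / (2 * (k : ℝ) + 1)
  have hF : Continuous F := by
    have h := Real.continuous_mul_log.comp Real.continuous_sin
    have h' : Continuous fun t => Real.sin t * Real.log (Real.sin t) := h
    unfold F
    fun_prop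
  rw [intervalIntegral.integral_eq_sub_of_hasDerivAt_of_le (f := F) (by positivity)
    hF.continuousOn _ (intervalIntegrable_term k)]
  · simp [F]
  · intro t ht
    have hs : 0 < Real.sin t := Real.sin_pos_of_pos_of_lt_pi ht.1 (by linarith [ht.2, Real.pi_pos])
    have h1 := (Real.hasDerivAt_sin t).pow (2 * k + 1)
    have h2 := (Real.hasDerivAt_sin t).log hs.ne'
    have h := (h1.div_const ((2 * (k : ℝ) + 1) ^ 2)).sub
      ((h1.mul h2).div_const (2 * (k : ℝ) + 1))
    have hfun : F = fun t => Real.sin t ^ (2 * k + 1) / (2 * (k : ℝ) + 1) ^ 2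
        - Real.sin t ^ (2 * k + 1) * Real.log (Real.sin t) / (2 * (k : ℝ) + 1) := by
      funext x
      simp only [F]
      ring
    rw [hfun]
    convert! h using 1
    simp only [Nat.add_sub_cancel, Pi.pow_apply]
    push_cast
    field_simp
    ring

lemma summable_c_div : Summable fun k : ℕ => c k * (1 / (2 * (k : ℝ) + 1) ^ 2) := by
  have h : Summable fun k : ℕ => 1 / ((k : ℝ) + 1) ^ 2 := by
    exact_mod_cast (summable_nat_add_iff 1).2 (Real.summable_one_div_nat_pow.2 one_lt_two)
  refine h.of_nonneg_of_le (fun k => mul_nonneg (c_nonneg k) (by positivity)) fun k => ?_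
  calc c k * (1 / (2 * (k : ℝ) + 1) ^ 2) ≤ 1 * (1 / (2 * (k : ℝ) + 1) ^ 2) := by
        gcongr
        exact c_le_one k
    _ ≤ 1 / ((k : ℝ) + 1) ^ 2 := by
        rw [one_mul]
        have : (0 : ℝ) ≤ k := k.cast_nonneg
        gcongr
        linarith

lemma hasSum_c_div :
    HasSum (fun k : ℕ => c k * (1 / (2 * (k : ℝ) + 1) ^ 2)) (Real.pi / 2 * Real.log 2) := by
  have hpi : (0 : ℝ) ≤ Real.pi / 2 := by positivity
  let f : ℕ → ℝ → ℝ := fun k t =>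
    c k * (Real.sin t ^ (2 * k) * Real.cos t * -Real.log (Real.sin t))
  have hint (k : ℕ) : Integrable (f k) (volume.restrict (Ioo 0 (Real.pi / 2))) :=
    (((intervalIntegrable_iff_integrableOn_Ioo_of_le hpi).1 (intervalIntegrable_term k))).const_mul _
  have hval (k : ℕ) : ∫ t in Ioo 0 (Real.pi / 2), f k t = c k * (1 / (2 * (k : ℝ) + 1) ^ 2) := by
    rw [← integral_term k, intervalIntegral.integral_of_le hpi, integral_Ioc_eq_integral_Ioo,
      ← integral_const_mul]
  have hnorm (k : ℕ) : ∫ t in Ioo 0 (Real.pi / 2), ‖f k t‖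
      = c k * (1 / (2 * (k : ℝ) + 1) ^ 2) := by
    rw [← hval]
    refine setIntegral_congr_fun measurableSet_Ioo fun t ht => ?_
    have hs : 0 ≤ Real.sin t :=
      Real.sin_nonneg_of_nonneg_of_le_pi ht.1.le (by linarith [ht.2, Real.pi_pos])
    have hc : 0 ≤ Real.cos t := Real.cos_nonneg_of_mem_Icc ⟨by linarith [ht.1], ht.2.le⟩
    have hl : 0 ≤ -Real.log (Real.sin t) :=
      neg_nonneg.2 (Real.log_nonpos hs (Real.sin_le_one t))
    exact Real.norm_of_nonneg (mul_nonneg (c_nonneg k) (by positivity))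
  have h := hasSum_integral_of_summable_integral_norm hint (by simpa only [hnorm] using summable_c_div)
  simp only [hval] at h
  convert! h using 1
  calc Real.pi / 2 * Real.log 2
      = ∫ t in (0 : ℝ)..(Real.pi / 2), -Real.log (Real.sin t) := by
        rw [intervalIntegral.integral_neg, integral_log_sin_zero_pi_div_two]
        ring
    _ = ∫ t in Ioo 0 (Real.pi / 2), -Real.log (Real.sin t) := by
        rw [intervalIntegral.integral_of_le hpi, integral_Ioc_eq_integral_Ioo]
    _ = ∫ t in Ioo 0 (Real.pi / 2), ∑' k, f k t := by
        refine setIntegral_congr_fun measurableSet_Ioo fun t ht => ?_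
        have h := (hasSum_c_sin ht.1 ht.2).mul_right (-Real.log (Real.sin t))
        simp only [mul_assoc, one_mul] at h
        simp only [f, mul_assoc]
        exact h.tsum_eq.symm

/-- The series `∑_{k=0}^∞ c(k)/(k + 1/2)²` converges and equals `π·log 4`;
i.e. `γ̃₁ = (1/π)·∑_{k=0}^∞ c(k)/(k + 1/2)²` equals `log 4`. -/
theorem gamma_tilde_one :
    HasSum (fun k : ℕ => c k / ((k : ℝ) + 1 / 2) ^ 2) (Real.pi * Real.log 4) ∧
    (1 / Real.pi) * ∑' k : ℕ, c k / ((k : ℝ) + 1 / 2) ^ 2 = Real.log 4 := by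
  have key : HasSum (fun k : ℕ => c k / ((k : ℝ) + 1 / 2) ^ 2) (Real.pi * Real.log 4) := by
    have h := hasSum_c_div.mul_left 4
    convert! h using 1
    · funext k
      have : (k : ℝ) + 1 / 2 = (2 * k + 1) / 2 := by ring
      rw [this]
      field_simp
      norm_num
    · rw [show (4 : ℝ) = 2 ^ 2 by norm_num, Real.log_pow]
      push_cast
      ring
  refine ⟨key, ?_⟩
  rw [key.tsum_eq, ← mul_assoc, one_div_mul_cancel Real.pi_ne_zero, one_mul]
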